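/- arXiv:2602.07530 — 2 statements merged into one kernel-verified Lean document; each statement's English description precedes it below -/
import Mathlib

section
/- Let H = (V, 𝓔) be a finite weighted hypergraph with |V| = n, and for λ ≥ 0 and K ⊆ V define Φ(K, λ) = |K| − λ · e(K). Then there exists a chain of subsets ∅ = S₀ ⊆ S₁ ⊆ S₂ ⊆ ⋯ ⊆ S_k ⊆ V with k ≤ n such that for every λ ≥ 0, at least one set S_i in the chain minimizes Φ(·, λ) over all subsets of V. -/
open Finset

/-- Total induced weight of hyperedges contained in `K`. -/
noncomputable def inducedWeight {V : Type*} [DecidableEq V]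
    (𝓔 : Finset (Finset V)) (w : Finset V → ℝ) (K : Finset V) : ℝ :=
  ∑ e ∈ 𝓔.filter (fun e => e ⊆ K), w e

/-- The Lagrangian objective `Φ(K, λ) = |K| - λ·e(K)`. -/
noncomputable def lagObj {V : Type*} [DecidableEq V]
    (𝓔 : Finset (Finset V)) (w : Finset V → ℝ) (K : Finset V) (lam : ℝ) : ℝ :=
  (K.card : ℝ) - lam * inducedWeight 𝓔 w K


theorem aux_mono {V : Type*} [DecidableEq V]
    (𝓔 : Finset (Finset V)) (w : Finset V → ℝ) (hw : ∀ e ∈ 𝓔, 0 ≤ w e)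
    {A B : Finset V} (h : A ⊆ B) : inducedWeight 𝓔 w A ≤ inducedWeight 𝓔 w B := by
  unfold inducedWeight
  rw [Finset.sum_filter, Finset.sum_filter]
  apply Finset.sum_le_sum
  intro e he
  have := hw e he
  by_cases h1 : e ⊆ A
  · simp [h1, h1.trans h]
  · simp only [h1, if_false]
    split_ifs <;> simp [this]

theorem aux_super {V : Type*} [DecidableEq V]
    (𝓔 : Finset (Finset V)) (w : Finset V → ℝ) (hw : ∀ e ∈ 𝓔, 0 ≤ w e)
    (A B : Finset V) : inducedWeight 𝓔 w A + inducedWeight 𝓔 w B ≤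
      inducedWeight 𝓔 w (A ∪ B) + inducedWeight 𝓔 w (A ∩ B) := by
  unfold inducedWeight
  simp only [Finset.sum_filter]
  rw [← Finset.sum_add_distrib, ← Finset.sum_add_distrib]
  apply Finset.sum_le_sum
  intro e he
  have := hw e he
  have hA : e ⊆ A → e ⊆ A ∪ B := fun h => h.trans Finset.subset_union_left
  have hB : e ⊆ B → e ⊆ A ∪ B := fun h => h.trans Finset.subset_union_right
  have hI : e ⊆ A ∩ B ↔ e ⊆ A ∧ e ⊆ B := Finset.subset_inter_iff
  by_cases h1 : e ⊆ A <;> by_cases h2 : e ⊆ B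
  · simp [h1, h2, hA h1, hI]
  · simp [h1, h2, hA h1, hI]
  · simp [h1, h2, hB h2, hI]
  · simp only [h1, h2, hI, if_false, false_and]
    split_ifs <;> simp [this]

theorem aux_min {V : Type*} [Fintype V] [DecidableEq V]
    (𝓔 : Finset (Finset V)) (w : Finset V → ℝ) (lam : ℝ) :
    ∃ A : Finset V, (∀ K, lagObj 𝓔 w A lam ≤ lagObj 𝓔 w K lam) ∧
      ∀ B : Finset V, (∀ K, lagObj 𝓔 w B lam ≤ lagObj 𝓔 w K lam) → A.card ≤ B.card := by
  classical
  obtain ⟨A₀, -, h₀⟩ := Finset.exists_min_image (Finset.univ : Finset (Finset V))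
    (fun K => lagObj 𝓔 w K lam) Finset.univ_nonempty
  obtain ⟨A, hA, h⟩ := Finset.exists_min_image
    ((Finset.univ : Finset (Finset V)).filter
      (fun B => ∀ K, lagObj 𝓔 w B lam ≤ lagObj 𝓔 w K lam)) Finset.card
    ⟨A₀, by simpa using h₀⟩
  exact ⟨A, (Finset.mem_filter.1 hA).2, fun B hB => h B (by simpa using hB)⟩

theorem aux_nested {V : Type*} [DecidableEq V]
    (𝓔 : Finset (Finset V)) (w : Finset V → ℝ) (hw : ∀ e ∈ 𝓔, 0 ≤ w e)
    {lam mu : ℝ} (h0 : 0 ≤ lam) (hl : lam ≤ mu) {A B : Finset V}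
    (hA : ∀ K, lagObj 𝓔 w A lam ≤ lagObj 𝓔 w K lam)
    (hA' : ∀ B : Finset V, (∀ K, lagObj 𝓔 w B lam ≤ lagObj 𝓔 w K lam) → A.card ≤ B.card)
    (hB : ∀ K, lagObj 𝓔 w B mu ≤ lagObj 𝓔 w K mu) : A ⊆ B := by
  have key : lagObj 𝓔 w (A ∩ B) lam ≤ lagObj 𝓔 w A lam := by
    have h1 := hB (A ∪ B)
    have h2 := mul_le_mul_of_nonneg_left (aux_super 𝓔 w hw A B) h0
    have h3 := aux_mono 𝓔 w hw (Finset.subset_union_right : B ⊆ A ∪ B)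
    have h4 := mul_le_mul_of_nonneg_right hl (sub_nonneg.2 h3)
    have h5 : ((A ∪ B).card : ℝ) + (A ∩ B).card = A.card + B.card := by
      exact_mod_cast Finset.card_union_add_card_inter A B
    unfold lagObj at *
    linarith
  have hc := hA' (A ∩ B) (fun K => key.trans (hA K))
  have := Finset.eq_of_subset_of_card_le (Finset.inter_subset_left : A ∩ B ⊆ A) hc
  exact Finset.inter_eq_left.1 this

/-- there is a single chain `∅ = S₀ ⊆ S₁ ⊆ ⋯ ⊆ S_k ⊆ V` with
`k ≤ n = |V|` such that for every `λ ≥ 0` some set in the chain minimizes the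
Lagrangian objective `Φ(·, λ)` over all subsets of `V`. -/
theorem lagrangian_minimizer_chain {V : Type*} [Fintype V] [DecidableEq V]
    (𝓔 : Finset (Finset V)) (w : Finset V → ℝ) (hw : ∀ e ∈ 𝓔, 0 ≤ w e) :
    ∃ (k : ℕ) (S : ℕ → Finset V),
      k ≤ Fintype.card V ∧
      S 0 = ∅ ∧
      (∀ i j, i ≤ j → j ≤ k → S i ⊆ S j) ∧
      (∀ lam : ℝ, 0 ≤ lam →
        ∃ i ≤ k, ∀ K : Finset V, lagObj 𝓔 w (S i) lam ≤ lagObj 𝓔 w K lam) := by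
  classical
  choose M hM hM' using aux_min 𝓔 w
  have hmono : ∀ a b : ℝ, 0 ≤ a → a ≤ b → M a ⊆ M b := fun a b h0 hab =>
    aux_nested 𝓔 w hw h0 hab (hM a) (hM' a) (hM b)
  refine ⟨Fintype.card V, fun i => Finset.univ.filter
    (fun v => ∃ a : ℝ, 0 ≤ a ∧ v ∈ M a ∧ (M a).card ≤ i), le_rfl, ?_, ?_, ?_⟩
  · apply Finset.filter_eq_empty_iff.2
    rintro v - ⟨a, -, hv, hc⟩
    rw [Finset.card_eq_zero.1 (Nat.le_zero.1 hc)] at hv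
    simp at hv
  · intro i j hij _ v hv
    obtain ⟨a, h0, hv, hc⟩ := (Finset.mem_filter.1 hv).2
    exact Finset.mem_filter.2 ⟨Finset.mem_univ _, a, h0, hv, hc.trans hij⟩
  · intro lam hlam
    refine ⟨(M lam).card, Finset.card_le_univ _, ?_⟩
    have : Finset.univ.filter
        (fun v => ∃ a : ℝ, 0 ≤ a ∧ v ∈ M a ∧ (M a).card ≤ (M lam).card) = M lam := by
      ext v
      simp only [Finset.mem_filter, Finset.mem_univ, true_and]
      constructor
      · rintro ⟨a, h0, hv, hc⟩
        rcases le_total a lam with h | h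
        · exact hmono a lam h0 h hv
        · rw [Finset.eq_of_subset_of_card_le (hmono lam a hlam h) hc]
          exact hv
      · exact fun hv => ⟨lam, hlam, hv, le_rfl⟩
    intro K
    simp only [this]
    exact hM lam K
end

section
/- Let H = (V, 𝓔) be a finite weighted hypergraph with total weight W and fix a threshold ρ ∈ (0,1]. Then there exists a family {x(τ)}_{τ∈[0,1]} of optimal solutions of the conformal-subgraph LP at coverage parameter ε = 1 − τ such that the rounded sets K_τ = {v ∈ V : x_v(τ) ≥ ρ} satisfy: (i) for all τ₁ < τ₂ in [0,1], K_{τ₁} ⊆ K_{τ₂}; and (ii) for every τ ∈ [0,1] there exists λ ≥ 0 such that K_τ minimizes Φ(·, λ) = |·| − λ·e(·) over all subsets of V. -/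
open Finset

/-- Total weight of the hypergraph. -/
noncomputable def totalWeight {V : Type*} [DecidableEq V]
    (𝓔 : Finset (Finset V)) (w : Finset V → ℝ) : ℝ :=
  ∑ e ∈ 𝓔, w e

/-- Feasibility for the conformal-subgraph LP at coverage parameter `ε`. -/
def LPFeasible {V : Type*} [Fintype V] [DecidableEq V]
    (𝓔 : Finset (Finset V)) (w : Finset V → ℝ) (ε : ℝ)
    (x : V → ℝ) (z : Finset V → ℝ) : Prop :=
  (∀ v, x v ∈ Set.Icc (0:ℝ) 1) ∧
  (∀ e ∈ 𝓔, z e ∈ Set.Icc (0:ℝ) 1) ∧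
  (∀ e ∈ 𝓔, ∀ v ∈ e, z e ≤ x v) ∧
  (1 - ε) * totalWeight 𝓔 w ≤ ∑ e ∈ 𝓔, w e * z e

/-- `z_e = min_{v ∈ e} x_v` (with the convention `1` for an empty hyperedge). -/
noncomputable def minOnEdge {V : Type*} (x : V → ℝ) (e : Finset V) : ℝ :=
  if h : e.Nonempty then e.inf' h x else 1

section Helpers

open MeasureTheory

variable {V : Type*} [Fintype V] [DecidableEq V]

lemma iw_eq (𝓔 : Finset (Finset V)) (w : Finset V → ℝ) (K : Finset V) :
    inducedWeight 𝓔 w K = ∑ e ∈ 𝓔, w e * (if e ⊆ K then (1:ℝ) else 0) := by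
  simp [inducedWeight, Finset.sum_filter]

lemma iw_super (𝓔 : Finset (Finset V)) (w : Finset V → ℝ) (hw : ∀ e ∈ 𝓔, 0 ≤ w e)
    (A K : Finset V) :
    inducedWeight 𝓔 w A + inducedWeight 𝓔 w K ≤
      inducedWeight 𝓔 w (A ∪ K) + inducedWeight 𝓔 w (A ∩ K) := by
  simp only [iw_eq, ← Finset.sum_add_distrib, ← mul_add]
  refine Finset.sum_le_sum fun e he => mul_le_mul_of_nonneg_left ?_ (hw e he)
  by_cases h1 : e ⊆ A <;> by_cases h2 : e ⊆ K
  · simp [h1, h2, Finset.subset_inter_iff, h1.trans Finset.subset_union_left]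
  · simp [h1, h2, Finset.subset_inter_iff, h1.trans Finset.subset_union_left]
  · simp [h1, h2, Finset.subset_inter_iff, h2.trans Finset.subset_union_right]
  · simp only [h1, h2, if_false]
    split_ifs <;> norm_num

lemma iw_mono (𝓔 : Finset (Finset V)) (w : Finset V → ℝ) (hw : ∀ e ∈ 𝓔, 0 ≤ w e)
    {A K : Finset V} (h : A ⊆ K) : inducedWeight 𝓔 w A ≤ inducedWeight 𝓔 w K := by
  simp only [iw_eq]
  refine Finset.sum_le_sum fun e he => mul_le_mul_of_nonneg_left ?_ (hw e he)
  by_cases h1 : e ⊆ A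
  · simp [h1, h1.trans h]
  · simp only [h1, if_false]
    split_ifs <;> norm_num

lemma iw_univ (𝓔 : Finset (Finset V)) (w : Finset V → ℝ) :
    inducedWeight 𝓔 w Finset.univ = totalWeight 𝓔 w := by
  simp [inducedWeight, totalWeight]

lemma lag_union (𝓔 : Finset (Finset V)) (w : Finset V → ℝ) (hw : ∀ e ∈ 𝓔, 0 ≤ w e)
    (A K : Finset V) (lam : ℝ) (hl : 0 ≤ lam)
    (hA : ∀ L, lagObj 𝓔 w A lam ≤ lagObj 𝓔 w L lam)
    (hK : ∀ L, lagObj 𝓔 w K lam ≤ lagObj 𝓔 w L lam) :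
    ∀ L, lagObj 𝓔 w (A ∪ K) lam ≤ lagObj 𝓔 w L lam := by
  intro L
  refine le_trans ?_ (hK L)
  have h1 := hA (A ∩ K)
  have h2 := mul_le_mul_of_nonneg_left (iw_super 𝓔 w hw A K) hl
  have h3 : ((A ∪ K).card : ℝ) + ((A ∩ K).card : ℝ) = A.card + K.card := by
    exact_mod_cast Finset.card_union_add_card_inter A K
  unfold lagObj at *
  linarith

lemma layer_integrable (a : ℝ) :
    Integrable ((Set.Iic a).indicator (fun _ => (1:ℝ)))
      (volume.restrict (Set.Ioc (0:ℝ) 1)) :=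
  (integrable_const (1:ℝ)).indicator measurableSet_Iic

lemma layer_integral (a : ℝ) (ha : a ∈ Set.Icc (0:ℝ) 1) :
    ∫ θ, (Set.Iic a).indicator (fun _ => (1:ℝ)) θ ∂(volume.restrict (Set.Ioc (0:ℝ) 1)) = a := by
  rw [integral_indicator measurableSet_Iic, Measure.restrict_restrict measurableSet_Iic]
  have : Set.Iic a ∩ Set.Ioc (0:ℝ) 1 = Set.Ioc 0 a := by
    ext y
    simp only [Set.mem_inter_iff, Set.mem_Iic, Set.mem_Ioc]
    have := ha.2
    constructor
    · rintro ⟨h1, h2, h3⟩; exact ⟨h2, h1⟩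
    · rintro ⟨h1, h2⟩; exact ⟨h2, h1, h2.trans this⟩
  rw [this]
  simp [Measure.real, ha.1]

lemma layer_cake (𝓔 : Finset (Finset V)) (w : Finset V → ℝ) (hw : ∀ e ∈ 𝓔, 0 ≤ w e)
    (lam : ℝ) (hl : 0 ≤ lam) (m : ℝ) (hm : ∀ L, m ≤ lagObj 𝓔 w L lam)
    (x : V → ℝ) (z : Finset V → ℝ) (hx : ∀ v, x v ∈ Set.Icc (0:ℝ) 1)
    (hz : ∀ e ∈ 𝓔, z e ∈ Set.Icc (0:ℝ) 1) (hzx : ∀ e ∈ 𝓔, ∀ v ∈ e, z e ≤ x v) :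
    m ≤ ∑ v, x v - lam * ∑ e ∈ 𝓔, w e * z e := by
  let μ := volume.restrict (Set.Ioc (0:ℝ) 1)
  let g : ℝ → ℝ → ℝ := fun a => (Set.Iic a).indicator (fun _ => (1:ℝ))
  have hgi : ∀ a, Integrable (g a) μ := layer_integrable
  have i1 : Integrable (fun θ => ∑ v, g (x v) θ) μ := integrable_finsetSum _ fun v _ => hgi _
  have i2 : Integrable (fun θ => ∑ e ∈ 𝓔, w e * g (z e) θ) μ :=
    integrable_finsetSum _ fun e _ => (hgi _).const_mul _
  have key : ∫ _θ, m ∂μ ≤ ∫ θ, (∑ v, g (x v) θ - lam * ∑ e ∈ 𝓔, w e * g (z e) θ) ∂μ := by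
    refine integral_mono (integrable_const m) (i1.sub (i2.const_mul lam)) ?_
    intro θ
    refine (hm (Finset.univ.filter fun v => θ ≤ x v)).trans ?_
    unfold lagObj
    have e1 : ((Finset.univ.filter fun v => θ ≤ x v).card : ℝ) = ∑ v, g (x v) θ := by
      simp [g, Set.indicator_apply]
    have e2 : ∑ e ∈ 𝓔, w e * g (z e) θ ≤
        inducedWeight 𝓔 w (Finset.univ.filter fun v => θ ≤ x v) := by
      rw [iw_eq]
      refine Finset.sum_le_sum fun e he => mul_le_mul_of_nonneg_left ?_ (hw e he)
      by_cases h : θ ≤ z e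
      · have : e ⊆ Finset.univ.filter fun v => θ ≤ x v := by
          intro v hv
          simpa using h.trans (hzx e he v hv)
        simp [this, g, Set.indicator_apply, h]
      · simp only [g, Set.indicator_apply, Set.mem_Iic, h, if_false]
        split_ifs <;> norm_num
    have := mul_le_mul_of_nonneg_left e2 hl
    simp only
    linarith
  rw [integral_sub i1 (i2.const_mul lam), integral_const_mul,
    integral_finsetSum _ (fun v _ => hgi _),
    integral_finsetSum _ (fun e _ => (hgi _).const_mul _)] at key
  have k1 : ∑ v, ∫ θ, g (x v) θ ∂μ = ∑ v, x v :=
    Finset.sum_congr rfl fun v _ => layer_integral _ (hx v)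
  have k2 : ∑ e ∈ 𝓔, ∫ θ, w e * g (z e) θ ∂μ = ∑ e ∈ 𝓔, w e * z e :=
    Finset.sum_congr rfl fun e he => by
      rw [integral_const_mul]; exact congrArg _ (layer_integral _ (hz e he))
  rw [k1, k2] at key
  simpa [μ, Measure.real] using key

lemma le_minOnEdge (x : V → ℝ) (e : Finset V) (c : ℝ) (hc : c ≤ 1) (h : ∀ v ∈ e, c ≤ x v) :
    c ≤ minOnEdge x e := by
  unfold minOnEdge
  split_ifs with he
  · exact Finset.le_inf' _ _ h
  · exact hc

lemma minOnEdge_le (x : V → ℝ) (e : Finset V) (v : V) (hv : v ∈ e) : minOnEdge x e ≤ x v := by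
  unfold minOnEdge
  rw [dif_pos ⟨v, hv⟩]
  exact Finset.inf'_le _ hv

lemma minOnEdge_mem (x : V → ℝ) (hx : ∀ v, x v ∈ Set.Icc (0:ℝ) 1) (e : Finset V) :
    minOnEdge x e ∈ Set.Icc (0:ℝ) 1 := by
  refine ⟨le_minOnEdge x e 0 zero_le_one fun v _ => (hx v).1, ?_⟩
  by_cases he : e.Nonempty
  · obtain ⟨v, hv⟩ := he
    exact (minOnEdge_le x e v hv).trans (hx v).2
  · simp [minOnEdge, he]

/-- The `ρ`-threshold set. -/
noncomputable def thr (ρ : ℝ) (x : V → ℝ) : Finset V := Finset.univ.filter fun v => ρ ≤ x v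

/-- Certificate that `x` is optimal for required coverage `s`, and that its rounding is a
Lagrangian minimizer. -/
def Good (𝓔 : Finset (Finset V)) (w : Finset V → ℝ) (ρ s : ℝ) (x : V → ℝ) : Prop :=
  (∀ v, x v ∈ Set.Icc (0:ℝ) 1) ∧ s ≤ ∑ e ∈ 𝓔, w e * minOnEdge x e ∧
  ∃ lam : ℝ, 0 ≤ lam ∧ (∀ K, lagObj 𝓔 w (thr ρ x) lam ≤ lagObj 𝓔 w K lam) ∧
    ∑ v, x v = lagObj 𝓔 w (thr ρ x) lam + lam * s

/-- Interpolation between indicators. -/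
noncomputable def interp (A B : Finset V) (t : ℝ) (v : V) : ℝ :=
  (1 - t) * (if v ∈ A then 1 else 0) + t * (if v ∈ B then 1 else 0)

lemma thr_interp (A B : Finset V) (hAB : A ⊆ B) (t ρ : ℝ) (hρ : ρ ∈ Set.Ioc (0:ℝ) 1) :
    thr ρ (interp A B t) = if ρ ≤ t then B else A := by
  ext v
  simp only [thr, Finset.mem_filter, Finset.mem_univ, true_and, interp]
  by_cases hA : v ∈ A
  · have hB := hAB hA
    have : v ∈ (if ρ ≤ t then B else A) := by split_ifs <;> assumption
    simp [hA, hB, this, hρ.2]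
  · by_cases hB : v ∈ B
    · split_ifs <;> simp_all
    · have : v ∉ (if ρ ≤ t then B else A) := by split_ifs <;> assumption
      simp [hA, hB, this, hρ.1]

lemma good_interp (𝓔 : Finset (Finset V)) (w : Finset V → ℝ) (hw : ∀ e ∈ 𝓔, 0 ≤ w e)
    (A B : Finset V) (hAB : A ⊆ B) (t ρ : ℝ) (hρ : ρ ∈ Set.Ioc (0:ℝ) 1)
    (ht : t ∈ Set.Icc (0:ℝ) 1) (lam : ℝ) (hl : 0 ≤ lam)
    (hA : ∀ L, lagObj 𝓔 w A lam ≤ lagObj 𝓔 w L lam)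
    (hB : ∀ L, lagObj 𝓔 w B lam ≤ lagObj 𝓔 w L lam) (s : ℝ)
    (hs : s = (1 - t) * inducedWeight 𝓔 w A + t * inducedWeight 𝓔 w B) :
    Good 𝓔 w ρ s (interp A B t) := by
  obtain ⟨ht0, ht1⟩ := ht
  have hAB' : lagObj 𝓔 w A lam = lagObj 𝓔 w B lam := le_antisymm (hA B) (hB A)
  refine ⟨?_, ?_, lam, hl, ?_, ?_⟩
  · intro v
    unfold interp
    constructor <;> split_ifs <;> linarith
  · rw [hs, iw_eq, iw_eq, Finset.mul_sum, Finset.mul_sum, ← Finset.sum_add_distrib]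
    refine Finset.sum_le_sum fun e he => ?_
    have : (1 - t) * (if e ⊆ A then (1:ℝ) else 0) + t * (if e ⊆ B then (1:ℝ) else 0)
        ≤ minOnEdge (interp A B t) e := by
      refine le_minOnEdge _ _ _ ?_ ?_
      · split_ifs <;> linarith
      · intro v hv
        unfold interp
        have a1 : (if e ⊆ A then (1:ℝ) else 0) ≤ if v ∈ A then 1 else 0 := by
          by_cases h : e ⊆ A
          · simp [h, h hv]
          · simp only [h, if_false]; split_ifs <;> norm_num
        have a2 : (if e ⊆ B then (1:ℝ) else 0) ≤ if v ∈ B then 1 else 0 := by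
          by_cases h : e ⊆ B
          · simp [h, h hv]
          · simp only [h, if_false]; split_ifs <;> norm_num
        exact add_le_add (mul_le_mul_of_nonneg_left a1 (by linarith))
          (mul_le_mul_of_nonneg_left a2 ht0)
    have := mul_le_mul_of_nonneg_left this (hw e he)
    linarith
  · rw [thr_interp A B hAB t ρ hρ]
    split_ifs <;> assumption
  · have h1 : lagObj 𝓔 w (thr ρ (interp A B t)) lam = lagObj 𝓔 w A lam := by
      rw [thr_interp A B hAB t ρ hρ]
      split_ifs
      · exact hAB'.symm
      · rfl
    have h2 : ∑ v, interp A B t v = (1 - t) * A.card + t * B.card := by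
      simp [interp, Finset.sum_add_distrib]
      ring
    rw [h1, h2, hs]
    unfold lagObj at *
    linear_combination (-t) * hAB'

/-- The family from a Lagrangian minimizer upwards. -/
lemma exists_family (𝓔 : Finset (Finset V)) (w : Finset V → ℝ) (hw : ∀ e ∈ 𝓔, 0 ≤ w e)
    (ρ : ℝ) (hρ : ρ ∈ Set.Ioc (0:ℝ) 1) (n : ℕ) :
    ∀ (A : Finset V) (lam : ℝ), Fintype.card V - A.card ≤ n → 0 ≤ lam →
      (∀ L, lagObj 𝓔 w A lam ≤ lagObj 𝓔 w L lam) →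
      ∃ x : ℝ → V → ℝ, ∀ s, inducedWeight 𝓔 w A ≤ s → s ≤ totalWeight 𝓔 w →
        Good 𝓔 w ρ s (x s) ∧ A ⊆ thr ρ (x s) ∧
        ∀ s', s ≤ s' → s' ≤ totalWeight 𝓔 w → thr ρ (x s) ⊆ thr ρ (x s') := by
  induction n with
  | zero =>
    intro A lam hn hl hA
    have : A = Finset.univ := by
      rw [← Finset.card_eq_iff_eq_univ]
      have := Finset.card_le_univ A
      omega
    subst this
    refine ⟨fun _ => interp Finset.univ Finset.univ 0, fun s h1 h2 => ⟨?_, ?_, fun _ _ _ => subset_rfl⟩⟩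
    · refine good_interp 𝓔 w hw _ _ subset_rfl 0 ρ hρ (by simp) lam hl hA hA s ?_
      rw [iw_univ] at *
      linarith
    · rw [thr_interp _ _ subset_rfl _ _ hρ]; simp
  | succ n ih =>
    intro A lam hn hl hA
    by_cases hmax : inducedWeight 𝓔 w A = totalWeight 𝓔 w
    · refine ⟨fun _ => interp A A 0, fun s h1 h2 => ⟨?_, ?_, fun _ _ _ => subset_rfl⟩⟩
      · refine good_interp 𝓔 w hw _ _ subset_rfl 0 ρ hρ (by simp) lam hl hA hA s ?_
        linarith
      · rw [thr_interp _ _ subset_rfl _ _ hρ]; simp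
    have hlt : inducedWeight 𝓔 w A < totalWeight 𝓔 w :=
      lt_of_le_of_ne (by rw [← iw_univ]; exact iw_mono 𝓔 w hw (Finset.subset_univ A)) hmax
    obtain ⟨K, hK, hKmin⟩ := Finset.exists_min_image
      (Finset.univ.filter fun K : Finset V => inducedWeight 𝓔 w A < inducedWeight 𝓔 w K)
      (fun K => ((K.card : ℝ) - A.card) / (inducedWeight 𝓔 w K - inducedWeight 𝓔 w A))
      ⟨Finset.univ, by simpa [iw_univ] using hlt⟩
    simp only [Finset.mem_filter, Finset.mem_univ, true_and] at hK hKmin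
    set l1 := ((K.card : ℝ) - A.card) / (inducedWeight 𝓔 w K - inducedWeight 𝓔 w A) with hl1
    have hl1' : l1 * (inducedWeight 𝓔 w K - inducedWeight 𝓔 w A) = (K.card : ℝ) - A.card :=
      div_mul_cancel₀ _ (by linarith)
    have hle : lam ≤ l1 := by
      rw [hl1, le_div_iff₀ (by linarith)]
      have := hA K
      unfold lagObj at this
      linarith
    have hA1 : ∀ L, lagObj 𝓔 w A l1 ≤ lagObj 𝓔 w L l1 := by
      intro L
      by_cases hL : inducedWeight 𝓔 w A < inducedWeight 𝓔 w L
      · have := hKmin L hL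
        rw [le_div_iff₀ (by linarith)] at this
        unfold lagObj
        linarith
      · have h1 := hA L
        have h2 := mul_le_mul_of_nonneg_right hle
          (show 0 ≤ inducedWeight 𝓔 w A - inducedWeight 𝓔 w L by linarith)
        unfold lagObj at *
        linarith
    have hK1 : ∀ L, lagObj 𝓔 w K l1 ≤ lagObj 𝓔 w L l1 := by
      intro L
      refine le_trans (le_of_eq ?_) (hA1 L)
      unfold lagObj
      linarith
    have hl10 : 0 ≤ l1 := hl.trans hle
    have hB1 := lag_union 𝓔 w hw A K l1 hl10 hA1 hK1
    have hAB : A ⊆ A ∪ K := Finset.subset_union_left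
    have hwB : inducedWeight 𝓔 w A < inducedWeight 𝓔 w (A ∪ K) :=
      hK.trans_le (iw_mono 𝓔 w hw Finset.subset_union_right)
    generalize A ∪ K = B at *
    have hcard : A.card < B.card := by
      refine Finset.card_lt_card (hAB.ssubset_of_ne ?_)
      rintro rfl
      exact lt_irrefl _ hwB
    obtain ⟨y, hy⟩ := ih B l1 (by omega) hl10 hB1
    let t : ℝ → ℝ := fun s =>
      (s - inducedWeight 𝓔 w A) / (inducedWeight 𝓔 w B - inducedWeight 𝓔 w A)
    have hd : 0 < inducedWeight 𝓔 w B - inducedWeight 𝓔 w A := by linarith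
    refine ⟨fun s => if s < inducedWeight 𝓔 w B then interp A B (t s) else y s, ?_⟩
    intro s h1 h2
    by_cases hs : s < inducedWeight 𝓔 w B
    · simp only [hs, if_true]
      refine ⟨?_, ?_, ?_⟩
      · refine good_interp 𝓔 w hw A B hAB (t s) ρ hρ ⟨?_, ?_⟩ l1 hl10 hA1 hB1 s ?_
        · exact div_nonneg (by linarith) hd.le
        · exact (div_le_one hd).2 (by linarith)
        · have : t s * (inducedWeight 𝓔 w B - inducedWeight 𝓔 w A) = s - inducedWeight 𝓔 w A :=
            div_mul_cancel₀ _ hd.ne'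
          linarith
      · rw [thr_interp A B hAB _ ρ hρ]
        split_ifs
        · exact hAB
        · exact subset_rfl
      · intro s' hs' hs'W
        rw [thr_interp A B hAB _ ρ hρ]
        by_cases hs2 : s' < inducedWeight 𝓔 w B
        · simp only [hs2, if_true]
          rw [thr_interp A B hAB _ ρ hρ]
          have htm : t s ≤ t s' := div_le_div_of_nonneg_right (by linarith) hd.le
          by_cases c1 : ρ ≤ t s
          · simp [c1, c1.trans htm]
          · simp only [c1, if_false]
            split_ifs
            · exact hAB
            · exact subset_rfl
        · simp only [hs2, if_false]
          have := (hy s' (not_lt.1 hs2) hs'W).2.1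
          split_ifs
          · exact this
          · exact hAB.trans this
    · simp only [hs, if_false]
      obtain ⟨g1, g2, g3⟩ := hy s (not_lt.1 hs) h2
      refine ⟨g1, hAB.trans g2, ?_⟩
      intro s' hs' hs'W
      have : ¬ s' < inducedWeight 𝓔 w B := by linarith
      simp only [this, if_false]
      exact g3 s' hs' hs'W

end Helpers

/-- monotonicity of threshold rounding: there is a family of
optimal LP solutions whose `ρ`-threshold roundings `K_τ` are nested in `τ`,
and each `K_τ` is a Lagrangian minimizer for some multiplier `λ ≥ 0`. -/
theorem monotone_threshold_rounding {V : Type*} [Fintype V] [DecidableEq V]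
    (𝓔 : Finset (Finset V)) (w : Finset V → ℝ) (hw : ∀ e ∈ 𝓔, 0 ≤ w e)
    (ρ : ℝ) (hρ : ρ ∈ Set.Ioc (0:ℝ) 1) :
    ∃ x : ℝ → V → ℝ,
      -- for each τ ∈ [0,1], x(τ) (with z_e = min_{v∈e} x_v(τ)) is an optimal
      -- solution of the LP at coverage parameter ε = 1 - τ
      (∀ τ ∈ Set.Icc (0:ℝ) 1,
        LPFeasible 𝓔 w (1 - τ) (x τ) (minOnEdge (x τ)) ∧
        ∀ (x' : V → ℝ) (z' : Finset V → ℝ),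
          LPFeasible 𝓔 w (1 - τ) x' z' → ∑ v, x τ v ≤ ∑ v, x' v) ∧
      -- (i) the rounded sets are nested
      (∀ τ₁ ∈ Set.Icc (0:ℝ) 1, ∀ τ₂ ∈ Set.Icc (0:ℝ) 1, τ₁ < τ₂ →
        Finset.univ.filter (fun v => ρ ≤ x τ₁ v) ⊆
          Finset.univ.filter (fun v => ρ ≤ x τ₂ v)) ∧
      -- (ii) each rounded set is a Lagrangian minimizer for some λ ≥ 0
      (∀ τ ∈ Set.Icc (0:ℝ) 1, ∃ lam : ℝ, 0 ≤ lam ∧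
        ∀ K : Finset V,
          lagObj 𝓔 w (Finset.univ.filter (fun v => ρ ≤ x τ v)) lam ≤
            lagObj 𝓔 w K lam) := by
  classical
  have hW : 0 ≤ totalWeight 𝓔 w := Finset.sum_nonneg hw
  have hempty : ∀ L, lagObj 𝓔 w (∅ : Finset V) 0 ≤ lagObj 𝓔 w L 0 := by
    intro L
    simp [lagObj]
  obtain ⟨y, hy⟩ := exists_family 𝓔 w hw ρ hρ _ ∅ 0 le_rfl le_rfl hempty
  -- coverage below the weight of the empty set costs nothing
  have hzero : thr ρ (fun _ : V => (0:ℝ)) = ∅ := by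
    simp [thr, hρ.1]
  have hfam : ∃ x : ℝ → V → ℝ, ∀ s, 0 ≤ s → s ≤ totalWeight 𝓔 w →
      Good 𝓔 w ρ s (x s) ∧
        ∀ s', s ≤ s' → s' ≤ totalWeight 𝓔 w → thr ρ (x s) ⊆ thr ρ (x s') := by
    refine ⟨fun s => if s < inducedWeight 𝓔 w ∅ then fun _ => 0 else y s, ?_⟩
    intro s h0 h1
    by_cases hs : s < inducedWeight 𝓔 w ∅
    · simp only [hs, if_true]
      refine ⟨⟨by simp, ?_, 0, le_rfl, ?_, ?_⟩, ?_⟩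
      · refine hs.le.trans ?_
        rw [iw_eq]
        refine Finset.sum_le_sum fun e he => mul_le_mul_of_nonneg_left ?_ (hw e he)
        refine le_minOnEdge _ _ _ ?_ ?_
        · split_ifs <;> norm_num
        · intro v hv
          have : ¬ e ⊆ ∅ := fun h => by simpa using h hv
          simp [this]
      · rw [hzero]; exact hempty
      · rw [hzero]; simp [lagObj]
      · intro s' _ _
        rw [hzero]; exact Finset.empty_subset _
    · simp only [hs, if_false]
      obtain ⟨g1, g2, g3⟩ := hy s (not_lt.1 hs) h1
      refine ⟨g1, ?_⟩
      intro s' hs' hs'W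
      have : ¬ s' < inducedWeight 𝓔 w ∅ := by linarith
      simp only [this, if_false]
      exact g3 s' hs' hs'W
  obtain ⟨x, hx⟩ := hfam
  have hb : ∀ τ ∈ Set.Icc (0:ℝ) 1, 0 ≤ τ * totalWeight 𝓔 w ∧
      τ * totalWeight 𝓔 w ≤ totalWeight 𝓔 w := fun τ hτ =>
    ⟨mul_nonneg hτ.1 hW, mul_le_of_le_one_left hW hτ.2⟩
  refine ⟨fun τ => x (τ * totalWeight 𝓔 w), ?_, ?_, ?_⟩
  · intro τ hτ
    obtain ⟨⟨g1, g2, lam, hl, g3, g4⟩, -⟩ := hx _ (hb τ hτ).1 (hb τ hτ).2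
    refine ⟨⟨g1, fun e _ => minOnEdge_mem _ g1 e, fun e _ v hv => minOnEdge_le _ e v hv, ?_⟩, ?_⟩
    · rw [sub_sub_cancel]; exact g2
    · rintro x' z' ⟨f1, f2, f3, f4⟩
      have h := layer_cake 𝓔 w hw lam hl _ g3 x' z' f1 f2 f3
      rw [sub_sub_cancel] at f4
      have h2 := mul_le_mul_of_nonneg_left f4 hl
      simp only
      linarith
  · intro τ₁ h1 τ₂ h2 h12
    exact (hx _ (hb τ₁ h1).1 (hb τ₁ h1).2).2 _ (mul_le_mul_of_nonneg_right h12.le hW) (hb τ₂ h2).2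
  · intro τ hτ
    obtain ⟨⟨g1, g2, lam, hl, g3, g4⟩, -⟩ := hx _ (hb τ hτ).1 (hb τ hτ).2
    exact ⟨lam, hl, g3⟩
end
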